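/- Let n, r ≥ 1, let Γ = ℤ_r = ℤ/rℤ, let Δ ⊆ Γ^n be the diagonal subgroup of constant tuples, and let Q = Γ^n / Δ with S_n acting by permuting coordinates (well defined since Δ is permutation-invariant). Then the number of S_n-orbits on Q equals the number of tuples (k₀, …, k_{r−1}) of nonnegative integers with k₀ + ⋯ + k_{r−1} = n and r dividing Σ_{i=0}^{r−1} i·k_i. -/

import Mathlib

/-!
The group `M` of tuples in `(ℤ_r)^n` with coordinate sum zero is the dual of `Q = (ℤ_r)^n / Δ` under
the pairing `(f, g) ↦ exp (2πi (∑ fᵢ gᵢ) / r)`, and `S_n` acts compatibly on both. A permutation `σ`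
has equally many fixed points on `Q` and on `M` (`card_fixed_eq`): the fixed points on `Q` form the
kernel of `σ - 1` on `Q`, the fixed points on `M` form the annihilator of the image of `σ - 1`, i.e.
the dual of its cokernel, and an endomorphism of a finite group has kernel and cokernel of the same
size. By Burnside's lemma `Q` and `M` then have equally many `S_n`-orbits (`card_orbits_congr`).

An orbit of `S_n` on `(ℤ_r)^n` is determined by the numbers `kᵢ` of coordinates equal to `i`, and the
coordinate sum is `∑ i kᵢ` modulo `r`; hence the orbits on `M` are counted by the tuples `k` with
`∑ kᵢ = n` and `r ∣ ∑ i kᵢ` (`card_orbits_sumZero`).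
-/

variable (n r : ℕ)

/-- The diagonal subgroup `Δ ⊆ (ℤ_r)^n` of constant tuples. -/
def diag : AddSubgroup (Fin n → ZMod r) where
  carrier := {g | ∃ c : ZMod r, g = fun _ => c}
  zero_mem' := ⟨0, rfl⟩
  add_mem' := by rintro a b ⟨c, rfl⟩ ⟨d, rfl⟩; exact ⟨c + d, rfl⟩
  neg_mem' := by rintro a ⟨c, rfl⟩; exact ⟨-c, rfl⟩

/-- The automorphism of `(ℤ_r)^n` permuting coordinates: `(σ • g) i = g (σ⁻¹ i)`. -/
def permAut (σ : Equiv.Perm (Fin n)) : AddAut (Fin n → ZMod r) where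
  toFun g := fun i => g (σ⁻¹ i)
  invFun g := fun i => g (σ i)
  left_inv g := funext fun i => by simp
  right_inv g := funext fun i => by simp
  map_add' g h := rfl

lemma diag_map (σ : Equiv.Perm (Fin n)) :
    (diag n r).map ↑(permAut n r σ) = diag n r := by
  ext g
  simp only [AddSubgroup.mem_map]
  constructor
  · rintro ⟨h, ⟨c, rfl⟩, rfl⟩
    exact ⟨c, rfl⟩
  · rintro ⟨c, rfl⟩
    exact ⟨fun _ => c, ⟨c, rfl⟩, rfl⟩

/-- The induced action of `σ ∈ S_n` on the quotient `Q = (ℤ_r)^n / Δ`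
(well defined since `Δ` is permutation-invariant). -/
def permQ (σ : Equiv.Perm (Fin n)) :
    (Fin n → ZMod r) ⧸ diag n r ≃+ (Fin n → ZMod r) ⧸ diag n r :=
  QuotientAddGroup.congr (diag n r) (diag n r) (permAut n r σ) (diag_map n r σ)

open MulAction

/-- Two finite `G`-sets on which each group element has equally many fixed points have equally many
orbits, by Burnside's lemma. -/
lemma card_orbits_congr {G X Y : Type*} [Group G] [Finite G] [MulAction G X] [MulAction G Y]
    [Finite X] [Finite Y] (h : ∀ g : G, Nat.card (fixedBy X g) = Nat.card (fixedBy Y g)) :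
    Nat.card (Quotient (orbitRel G X)) = Nat.card (Quotient (orbitRel G Y)) := by
  classical
  have := Fintype.ofFinite G
  have := Fintype.ofFinite X
  have := Fintype.ofFinite Y
  have := Fintype.ofFinite (Quotient (orbitRel G X))
  have := Fintype.ofFinite (Quotient (orbitRel G Y))
  have hX := sum_card_fixedBy_eq_card_orbits_mul_card_group G X
  have hY := sum_card_fixedBy_eq_card_orbits_mul_card_group G Y
  simp only [← Nat.card_eq_fintype_card] at hX hY
  simp only [h] at hX
  exact Nat.eq_of_mul_eq_mul_right Nat.card_pos (hX.symm.trans hY)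

/-- The dot product with `f` as an additive map in the second argument. -/
def dotHom (f : Fin n → ZMod r) : (Fin n → ZMod r) →+ ZMod r where
  toFun g := f ⬝ᵥ g
  map_zero' := dotProduct_zero f
  map_add' := dotProduct_add f

/-- A subgroup of `(ℤ_r)^n` and its annihilator under the dot product have complementary orders:
both sides are `∑ exp (2πi (f ⬝ h) / r)` over `h ∈ H` and all `f`, summed in the two orders. -/
lemma card_mul_card_annihilator [NeZero r] (H : AddSubgroup (Fin n → ZMod r)) :
    Nat.card H * Nat.card {f : Fin n → ZMod r // ∀ h ∈ H, f ⬝ᵥ h = 0} =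
      Nat.card (Fin n → ZMod r) := by
  classical
  let e : AddChar (ZMod r) ℂ := ZMod.stdAddChar
  have he : ∀ x, e x = 1 ↔ x = 0 := fun x => by
    rw [← AddChar.map_zero_eq_one e]
    exact ZMod.injective_stdAddChar.eq_iff
  have h1 : ∑ f : Fin n → ZMod r, ∑ h : H, e (f ⬝ᵥ (h : Fin n → ZMod r)) =
      (Nat.card H : ℂ) * Nat.card {f : Fin n → ZMod r // ∀ h ∈ H, f ⬝ᵥ h = 0} := by
    have : ∀ f : Fin n → ZMod r, ∑ h : H, e (f ⬝ᵥ (h : Fin n → ZMod r)) =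
        if ∀ h ∈ H, f ⬝ᵥ h = 0 then (Nat.card H : ℂ) else 0 := fun f => by
      have key := AddChar.sum_eq_ite (e.compAddMonoidHom ((dotHom n r f).comp H.subtype))
      have hz : e.compAddMonoidHom ((dotHom n r f).comp H.subtype) = 0 ↔
          ∀ h ∈ H, f ⬝ᵥ h = 0 := by
        rw [DFunLike.ext_iff]
        simp [he, dotHom]
      simp only [hz] at key
      simpa [dotHom, Nat.card_eq_fintype_card] using key
    simp only [this, ← Finset.sum_filter, Finset.sum_const]
    rw [nsmul_eq_mul, mul_comm,
      Nat.card_eq_fintype_card (α := {f : Fin n → ZMod r // ∀ h ∈ H, f ⬝ᵥ h = 0}),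
      Fintype.card_subtype]
  have h2 : ∑ h : H, ∑ f : Fin n → ZMod r, e (f ⬝ᵥ (h : Fin n → ZMod r)) =
      (Nat.card (Fin n → ZMod r) : ℂ) := by
    have : ∀ h : H, ∑ f : Fin n → ZMod r, e (f ⬝ᵥ (h : Fin n → ZMod r)) =
        if h = 0 then (Nat.card (Fin n → ZMod r) : ℂ) else 0 := fun h => by
      have key := AddChar.sum_eq_ite (e.compAddMonoidHom (dotHom n r h))
      have hz : e.compAddMonoidHom (dotHom n r h) = 0 ↔ h = 0 := by
        rw [DFunLike.ext_iff]
        simp only [AddChar.compAddMonoidHom_apply, AddChar.zero_apply, he]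
        constructor
        · intro hh
          ext i : 2
          simpa [dotHom] using hh (Pi.single i 1)
        · rintro rfl x
          simp [dotHom]
      simp only [hz] at key
      rw [Nat.card_eq_fintype_card, ← key]
      refine Finset.sum_congr rfl fun f _ => ?_
      simp [dotHom, dotProduct_comm]
    simp [this]
  rw [Finset.sum_comm, h2] at h1
  exact_mod_cast h1.symm

/-- The action of `S_n` on `Q = (ℤ_r)^n / Δ` given by `permQ`. -/
instance actQ : MulAction (Equiv.Perm (Fin n)) ((Fin n → ZMod r) ⧸ diag n r) where
  smul σ q := permQ n r σ q
  one_smul q := by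
    induction q using QuotientAddGroup.induction_on with | _ g => rfl
  mul_smul σ τ q := by
    induction q using QuotientAddGroup.induction_on with | _ g => rfl

/-- Tuples in `(ℤ_r)^n` with coordinate sum zero. -/
abbrev SumZero : Type := {f : Fin n → ZMod r // ∑ i, f i = 0}

/-- The permutation action of `S_n` on the tuples with coordinate sum zero. -/
instance actM : MulAction (Equiv.Perm (Fin n)) (SumZero n r) where
  smul σ f := ⟨permAut n r σ f.1, (Equiv.sum_comp σ⁻¹ f.1).trans f.2⟩
  one_smul _ := rfl
  mul_smul _ _ _ := rfl

/-- The endomorphism `σ - 1` of `Q`. -/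
def subOne (σ : Equiv.Perm (Fin n)) :
    (Fin n → ZMod r) ⧸ diag n r →+ (Fin n → ZMod r) ⧸ diag n r :=
  (permQ n r σ).toAddMonoidHom - AddMonoidHom.id _

lemma dotProduct_permAut (σ : Equiv.Perm (Fin n)) (f g : Fin n → ZMod r) :
    f ⬝ᵥ permAut n r σ g = (fun i => f (σ i)) ⬝ᵥ g := by
  rw [dotProduct, ← Equiv.sum_comp σ]
  simp [dotProduct, permAut]

/-- The annihilator of the preimage in `(ℤ_r)^n` of the image of `σ - 1` on `Q` is the set of
`σ`-invariant tuples of sum zero: annihilating `Δ` means sum zero, annihilating the image of `σ - 1`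
means `σ`-invariance. -/
lemma annihilator_iff (σ : Equiv.Perm (Fin n)) (f : Fin n → ZMod r) :
    (∀ h ∈ (subOne n r σ).range.comap (QuotientAddGroup.mk' (diag n r)), f ⬝ᵥ h = 0) ↔
      ∑ i, f i = 0 ∧ permAut n r σ f = f := by
  constructor
  · intro H
    constructor
    · have := H (fun _ => 1) ⟨0, (map_zero (subOne n r σ)).trans
        ((QuotientAddGroup.eq_zero_iff (N := diag n r) (fun _ => 1)).2 ⟨1, rfl⟩).symm⟩
      simpa [dotProduct] using this
    · have key : ∀ j, f (σ j) = f j := fun j => by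
        have := H (permAut n r σ (Pi.single j 1) - Pi.single j 1) ⟨((Pi.single j 1 :
          Fin n → ZMod r) : (Fin n → ZMod r) ⧸ diag n r), rfl⟩
        rw [dotProduct_sub, dotProduct_permAut] at this
        simpa [sub_eq_zero] using this
      funext i
      simpa [permAut] using (key (σ⁻¹ i)).symm
  · rintro ⟨h0, hf⟩ h ⟨q, hq⟩
    induction q using QuotientAddGroup.induction_on with | _ g =>
    have hq' : ((permAut n r σ g - g : Fin n → ZMod r) : (Fin n → ZMod r) ⧸ diag n r) = h := hq
    obtain ⟨c, hc⟩ := QuotientAddGroup.eq.1 hq'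
    have hh : h = (permAut n r σ g - g) + fun _ => c := by rw [← hc]; abel
    have hf' : (fun i => f (σ i)) = f := by
      funext i
      have := congrFun hf (σ i)
      simpa [permAut] using this.symm
    rw [hh, dotProduct_add, dotProduct_sub, dotProduct_permAut, hf', sub_self, zero_add, dotProduct,
      ← Finset.sum_mul, h0, zero_mul]

lemma card_fixed_eq [NeZero r] (σ : Equiv.Perm (Fin n)) :
    Nat.card (fixedBy ((Fin n → ZMod r) ⧸ diag n r) σ) = Nat.card (fixedBy (SumZero n r) σ) := by
  set H := (subOne n r σ).range.comap (QuotientAddGroup.mk' (diag n r)) with hH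
  have e1 : fixedBy ((Fin n → ZMod r) ⧸ diag n r) σ ≃ (subOne n r σ).ker :=
    Equiv.subtypeEquivRight fun q => by
      change permQ n r σ q = q ↔ permQ n r σ q - q = 0
      rw [sub_eq_zero]
  have e2 : fixedBy (SumZero n r) σ ≃ {f : Fin n → ZMod r // ∀ h ∈ H, f ⬝ᵥ h = 0} :=
    (Equiv.subtypeEquivRight fun f => by
      change (σ • f = f) ↔ permAut n r σ f.1 = f.1
      exact Subtype.ext_iff).trans
    ((Equiv.subtypeSubtypeEquivSubtypeInter (fun f : Fin n → ZMod r => ∑ i, f i = 0)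
      (fun f => permAut n r σ f = f)).trans
      (Equiv.subtypeEquivRight fun f => (annihilator_iff n r σ f).symm))
  rw [Nat.card_congr e1, Nat.card_congr e2]
  have h1 := card_mul_card_annihilator n r H
  have hind : H.index = (subOne n r σ).range.index :=
    AddSubgroup.index_comap_of_surjective _ (QuotientAddGroup.mk'_surjective _)
  have h2 := H.card_mul_index
  have h3 := (subOne n r σ).ker.card_mul_index
  rw [AddSubgroup.index_ker] at h3
  have h4 := (subOne n r σ).range.card_mul_index
  have h5 : Nat.card (subOne n r σ).ker = (subOne n r σ).range.index :=
    Nat.eq_of_mul_eq_mul_left (Nat.card_pos (α := (subOne n r σ).range))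
      (by rw [h4, mul_comm, h3])
  rw [h5, ← hind]
  exact Nat.eq_of_mul_eq_mul_left (Nat.card_pos (α := H)) (h2.trans h1.symm)

/-- Two functions on a finite type with fibres of equal sizes differ by a permutation. -/
lemma exists_perm_of_card_fiber {α β : Type*} [Finite α] (f g : α → β)
    (h : ∀ b, Nat.card {a // f a = b} = Nat.card {a // g a = b}) :
    ∃ σ : Equiv.Perm α, ∀ a, g (σ a) = f a := by
  have e : ∀ b, Nonempty ({a // f a = b} ≃ {a // g a = b}) := fun b =>
    Finite.card_eq.1 (h b)
  replace e := fun b => (e b).some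
  refine ⟨(Equiv.sigmaFiberEquiv f).symm.trans
    ((Equiv.sigmaCongrRight e).trans (Equiv.sigmaFiberEquiv g)), fun a => ?_⟩
  exact (e (f a) ⟨a, rfl⟩).2

/-- The orbits on the sum-zero tuples are counted by their multiplicity vectors. The modulus is
written `m + 1` so that `ZMod (m + 1)` is definitionally `Fin (m + 1)`. -/
lemma card_orbits_sumZero (m : ℕ) :
    Nat.card (Quotient (orbitRel (Equiv.Perm (Fin n)) (SumZero n (m + 1)))) =
      ((Finset.Nat.antidiagonalTuple (m + 1) n).filter
          (fun k => (m + 1) ∣ ∑ i : Fin (m + 1), (i : ℕ) * k i)).card := by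
  classical
  let K : SumZero n (m + 1) → Fin (m + 1) → ℕ := fun f i => Nat.card {j // f.1 j = i}
  have hcard : ∀ (f : Fin n → Fin (m + 1)), ∑ i, Nat.card {j // f j = i} = n := fun f => by
    rw [← Nat.card_sigma, Nat.card_congr (Equiv.sigmaFiberEquiv f), Nat.card_fin]
  -- The coordinate sum of `f`, grouped by the values taken.
  have hsum : ∀ (f : Fin n → ZMod (m + 1)),
      ((∑ i : Fin (m + 1), (i : ℕ) * Nat.card {j // f j = i} : ℕ) : ZMod (m + 1)) = ∑ j, f j := by
    intro f
    have key : ((∑ i : ZMod (m + 1), i.val * Nat.card {j // f j = i} : ℕ) : ZMod (m + 1)) =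
        ∑ j, f j := by
      rw [← Finset.sum_fiberwise Finset.univ f f, Nat.cast_sum]
      refine Finset.sum_congr rfl fun i _ => ?_
      have : ∀ j ∈ Finset.univ.filter (fun j => f j = i), f j = i := by simp
      rw [Finset.sum_congr rfl this, Finset.sum_const, nsmul_eq_mul, Nat.cast_mul,
        Nat.card_eq_fintype_card, Fintype.card_subtype, mul_comm, ZMod.natCast_zmod_val]
    exact key
  have hmem : ∀ f, K f ∈ (Finset.Nat.antidiagonalTuple (m + 1) n).filter
          (fun k => (m + 1) ∣ ∑ i : Fin (m + 1), (i : ℕ) * k i) := fun f => by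
    rw [Finset.mem_filter, Finset.Nat.mem_antidiagonalTuple]
    exact ⟨hcard f.1, (ZMod.natCast_eq_zero_iff _ _).1 ((hsum f.1).trans f.2)⟩
  have hK : ∀ f g : SumZero n (m + 1),
      orbitRel (Equiv.Perm (Fin n)) (SumZero n (m + 1)) f g ↔ K f = K g := by
    intro f g
    rw [orbitRel_apply]
    constructor
    · rintro ⟨σ, rfl⟩
      funext i
      exact Nat.card_congr (Equiv.subtypeEquiv σ⁻¹ fun a => Iff.rfl)
    · intro h
      obtain ⟨σ, hσ⟩ := exists_perm_of_card_fiber f.1 g.1 (fun b => congrFun h b)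
      exact ⟨σ⁻¹, Subtype.ext (funext fun i => hσ i)⟩
  rw [← Nat.card_eq_finsetCard]
  refine Nat.card_congr (Equiv.ofBijective (Quotient.lift (fun f => ⟨K f, hmem f⟩)
    fun f g h => Subtype.ext ((hK f g).1 h)) ⟨?_, ?_⟩)
  · rintro ⟨f⟩ ⟨g⟩ h
    exact Quotient.sound ((hK f g).2 (congrArg Subtype.val h))
  · rintro ⟨k, hk⟩
    rw [Finset.mem_filter, Finset.Nat.mem_antidiagonalTuple] at hk
    -- Distribute the `n` positions into blocks of sizes `k i` and record the block.
    have e : Fin n ≃ Σ i, Fin (k i) :=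
      Fintype.equivOfCardEq (by simp [hk.1])
    let f : Fin n → ZMod (m + 1) := fun j => (e j).1
    have hf : ∀ i : Fin (m + 1), Nat.card {j // f j = i} = k i := fun i => by
      refine (Nat.card_congr
        (Equiv.subtypeEquiv (q := fun x => x.1 = i) e fun a => Iff.rfl)).trans ?_
      rw [Nat.card_congr (Equiv.sigmaSubtype i), Nat.card_fin]
    refine ⟨Quotient.mk _ ⟨f, ?_⟩, Subtype.ext (funext hf)⟩
    rw [← hsum f, ZMod.natCast_eq_zero_iff]
    simpa only [hf] using hk.2

/-- The number of `S_n`-orbits on `Q = (ℤ_r)^n / Δ` equals the number of tuples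
`(k₀, …, k_{r-1})` of nonnegative integers with `k₀ + ⋯ + k_{r-1} = n` and
`r ∣ ∑ i * kᵢ`. -/
theorem card_orbits_eq_card_tuples (hn : 1 ≤ n) (hr : 1 ≤ r) :
    Nat.card
        (Quot fun q₁ q₂ : (Fin n → ZMod r) ⧸ diag n r =>
          ∃ σ : Equiv.Perm (Fin n), permQ n r σ q₁ = q₂) =
      ((Finset.Nat.antidiagonalTuple r n).filter
          (fun k => r ∣ ∑ i : Fin r, (i : ℕ) * k i)).card := by
  obtain ⟨m, rfl⟩ : ∃ m, r = m + 1 := ⟨r - 1, by omega⟩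
  rw [← card_orbits_sumZero, ← card_orbits_congr (card_fixed_eq n (m + 1))]
  refine Nat.card_congr (Quot.congrRight fun q₁ q₂ => ?_)
  rw [Setoid.comm', orbitRel_apply]
  exact Iff.rfl
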